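/- (Conformal invariance under Kelvin inversion.) Let n ≥ 3, μ > 0, let ι : ℝⁿ \ {0} → ℝⁿ \ {0} be the inversion ι(x) = μ² x / |x|², let Ω ⊆ ℝⁿ \ {0} be open, let K : ℝⁿ \ {0} → ℝ, and let u be a positive twice continuously differentiable function on ι(Ω) satisfying −c_n Δu = K u^((n+2)/(n−2)) on ι(Ω), where c_n = 4(n−1)/(n−2). Then the Kelvin transform ǔ(x) = (μ^(n−2)/|x|^(n−2)) u(ι(x)) satisfies −c_n Δǔ = (K ∘ ι) ǔ^((n+2)/(n−2)) on Ω. -/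

import Mathlib

/-- The Euclidean Laplacian: the sum of the second partial derivatives. -/
noncomputable def lap {n : ℕ} (u : EuclideanSpace ℝ (Fin n) → ℝ)
    (x : EuclideanSpace ℝ (Fin n)) : ℝ :=
  ∑ i : Fin n, fderiv ℝ (fun y => fderiv ℝ u y (EuclideanSpace.single i 1)) x
    (EuclideanSpace.single i 1)

/-!
Let `d` be the dimension and `w y = dist y c ^ (2 - d)`. The Kelvin transform of `u` is a constant
multiple of `w • (u ∘ ι)`. The derivative of the inversion `ι` at `x` is `(R / dist x c) ^ 2` times
a reflection, so the second-order part of `Δ (u ∘ ι)` is `(R / dist x c) ^ 4 • (Δ u ∘ ι)`. The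
weight `w` is harmonic away from `c`, and its exponent makes the cross term `2 • D(u ∘ ι) (∇ w)`
cancel the first-order term `w • Du (Δ ι)`. Finally, `(d + 2) / (d - 2)` is the exponent for which
raising `(R / dist x c) ^ (d - 2)` to it multiplies this weight by `(R / dist x c) ^ 4`.
-/

open EuclideanGeometry InnerProductSpace Laplacian Module Topology
open scoped Gradient RealInnerProductSpace

section SecondDerivative

variable {𝕜 : Type*} [NontriviallyNormedField 𝕜]
  {E : Type*} [NormedAddCommGroup E] [NormedSpace 𝕜 E]
  {F : Type*} [NormedAddCommGroup F] [NormedSpace 𝕜 F]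
  {G : Type*} [NormedAddCommGroup G] [NormedSpace 𝕜 G]

lemma differentiableAt_fderiv_of_contDiffAt_two {f : E → F} {x : E} (hf : ContDiffAt 𝕜 2 f x) :
    DifferentiableAt 𝕜 (fderiv 𝕜 f) x :=
  (hf.fderiv_right (m := 1) (by norm_num)).differentiableAt one_ne_zero

lemma fderiv_fderiv_smul_apply {f : E → 𝕜} {g : E → F} {x : E} (hf : ContDiffAt 𝕜 2 f x)
    (hg : ContDiffAt 𝕜 2 g x) (v w : E) :
    fderiv 𝕜 (fderiv 𝕜 (f • g)) x v w =
      f x • fderiv 𝕜 (fderiv 𝕜 g) x v w + fderiv 𝕜 f x v • fderiv 𝕜 g x w +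
        fderiv 𝕜 f x w • fderiv 𝕜 g x v + fderiv 𝕜 (fderiv 𝕜 f) x v w • g x := by
  have leibniz : fderiv 𝕜 (f • g) =ᶠ[𝓝 x]
      fun y => f y • fderiv 𝕜 g y + (fderiv 𝕜 f y).smulRight (g y) := by
    filter_upwards [hf.eventually (by simp), hg.eventually (by simp)] with y hfy hgy
    exact fderiv_smul (hfy.differentiableAt two_ne_zero) (hgy.differentiableAt two_ne_zero)
  have hf₁ := (hf.differentiableAt two_ne_zero).hasFDerivAt
  have hg₁ := (hg.differentiableAt two_ne_zero).hasFDerivAt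
  have hf₂ := (differentiableAt_fderiv_of_contDiffAt_two hf).hasFDerivAt
  have hg₂ := (differentiableAt_fderiv_of_contDiffAt_two hg).hasFDerivAt
  have h := (hf₁.smul hg₂).add
    (((ContinuousLinearMap.smulRightL 𝕜 E F).isBoundedBilinearMap.hasFDerivAt
      (fderiv 𝕜 f x, g x)).comp x (hf₂.prodMk hg₁))
  rw [leibniz.fderiv_eq]
  refine (congr($(h.fderiv) v w)).trans ?_
  simp only [ContinuousLinearMap.smulRightL_apply_apply, add_apply, smul_apply,
    ContinuousLinearMap.smulRight_apply, ContinuousLinearMap.comp_apply,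
    ContinuousLinearMap.prod_apply, IsBoundedBilinearMap.deriv_apply]
  abel

lemma fderiv_fderiv_comp_apply {g : F → G} {f : E → F} {x : E} (hg : ContDiffAt 𝕜 2 g (f x))
    (hf : ContDiffAt 𝕜 2 f x) (v w : E) :
    fderiv 𝕜 (fderiv 𝕜 (g ∘ f)) x v w =
      fderiv 𝕜 (fderiv 𝕜 g) (f x) (fderiv 𝕜 f x v) (fderiv 𝕜 f x w) +
        fderiv 𝕜 g (f x) (fderiv 𝕜 (fderiv 𝕜 f) x v w) := by
  have chain : fderiv 𝕜 (g ∘ f) =ᶠ[𝓝 x] fun y => (fderiv 𝕜 g (f y)).comp (fderiv 𝕜 f y) := by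
    filter_upwards [hf.continuousAt.eventually (hg.eventually (by simp)),
      hf.eventually (by simp)] with y hgy hfy
    exact fderiv_comp y (hgy.differentiableAt two_ne_zero) (hfy.differentiableAt two_ne_zero)
  have hf₁ := (hf.differentiableAt two_ne_zero).hasFDerivAt
  have hf₂ := (differentiableAt_fderiv_of_contDiffAt_two hf).hasFDerivAt
  have hg₂ := (differentiableAt_fderiv_of_contDiffAt_two hg).hasFDerivAt
  rw [chain.fderiv_eq]
  refine (congr($((hg₂.comp x hf₁).clm_comp hf₂ |>.fderiv) v w)).trans ?_
  simp [add_comm]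

end SecondDerivative

section Laplacian

variable {E : Type*} [NormedAddCommGroup E] [InnerProductSpace ℝ E] [FiniteDimensional ℝ E]
  {F : Type*} [NormedAddCommGroup F] [NormedSpace ℝ F]
  {G : Type*} [NormedAddCommGroup G] [InnerProductSpace ℝ G] [FiniteDimensional ℝ G]

lemma laplacian_eq_sum_fderiv_fderiv {ι : Type*} [Fintype ι] (b : OrthonormalBasis ι ℝ E)
    (f : E → F) (x : E) : Δ f x = ∑ i, fderiv ℝ (fderiv ℝ f) x (b i) (b i) := by
  simp [laplacian_eq_iteratedFDeriv_orthonormalBasis f b, iteratedFDeriv_two_apply]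

lemma laplacian_eq_sum_fderiv_fderiv_apply {ι : Type*} [Fintype ι] (b : OrthonormalBasis ι ℝ E)
    {f : E → F} {x : E} (hf : ContDiffAt ℝ 2 f x) :
    Δ f x = ∑ i, fderiv ℝ (fun y => fderiv ℝ f y (b i)) x (b i) := by
  simp [laplacian_eq_sum_fderiv_fderiv b,
    fderiv_clm_apply (differentiableAt_fderiv_of_contDiffAt_two hf) (differentiableAt_const _)]

lemma laplacian_smul_leibniz {f : E → ℝ} {g : E → F} {x : E} (hf : ContDiffAt ℝ 2 f x)
    (hg : ContDiffAt ℝ 2 g x) :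
    Δ (f • g) x = f x • Δ g x + (2 : ℝ) • fderiv ℝ g x (∇ f x) + Δ f x • g x := by
  let b := stdOrthonormalBasis ℝ E
  have cross : ∑ i, fderiv ℝ f x (b i) • fderiv ℝ g x (b i) = fderiv ℝ g x (∇ f x) := by
    simp_rw [← inner_gradient_left, real_inner_comm (b _), ← map_smul, ← map_sum, b.sum_repr']
  simp only [laplacian_eq_sum_fderiv_fderiv b, fderiv_fderiv_smul_apply hf hg,
    Finset.sum_add_distrib, ← Finset.smul_sum, ← Finset.sum_smul, cross, two_smul, add_assoc]

lemma laplacian_comp_of_fderiv_eq_smul {g : G → F} {f : E → G} {x : E}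
    (hg : ContDiffAt ℝ 2 g (f x)) (hf : ContDiffAt ℝ 2 f x) {r : ℝ} {L : E ≃ₗᵢ[ℝ] G}
    (hL : fderiv ℝ f x = r • (L : E →L[ℝ] G)) :
    Δ (g ∘ f) x = r ^ 2 • Δ g (f x) + fderiv ℝ g (f x) (Δ f x) := by
  let b := stdOrthonormalBasis ℝ E
  rw [laplacian_eq_sum_fderiv_fderiv b, laplacian_eq_sum_fderiv_fderiv b f,
    laplacian_eq_sum_fderiv_fderiv (b.map L)]
  simp [fderiv_fderiv_comp_apply hg hf, hL, Finset.sum_add_distrib, Finset.smul_sum, smul_smul,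
    sq]

end Laplacian

section DistRpow

variable {E : Type*} [NormedAddCommGroup E] [InnerProductSpace ℝ E] {c x : E}

lemma contDiffAt_dist_rpow (p : ℝ) (hx : x ≠ c) {n : WithTop ℕ∞} :
    ContDiffAt ℝ n (fun y => dist y c ^ p) x :=
  (contDiffAt_id.dist ℝ contDiffAt_const hx).rpow_const_of_ne (dist_ne_zero.2 hx)

lemma hasFDerivAt_dist_rpow (p : ℝ) (hx : x ≠ c) :
    HasFDerivAt (fun y => dist y c ^ p) ((p * dist x c ^ (p - 2)) • innerSL ℝ (x - c)) x := by
  have h := ((hasFDerivAt_id (𝕜 := ℝ) x).sub_const c).norm_sq.rpow_const (p := p / 2)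
    (Or.inl (by simpa [sub_eq_zero] using hx))
  convert h using 1
  · ext y
    simp [dist_eq_norm, ← Real.rpow_natCast_mul, mul_div_cancel₀]
  · ext v
    simp only [dist_eq_norm, smul_apply, coe_innerSL_apply, smul_eq_mul, id_eq, norm_nonneg,
      ← Real.rpow_natCast_mul, Nat.cast_ofNat, ContinuousLinearMap.comp_id, nsmul_eq_mul]
    ring_nf

lemma fderiv_fderiv_apply_dist_rpow (p : ℝ) (hx : x ≠ c) (v w : E) :
    fderiv ℝ (fun y => fderiv ℝ (fun z => dist z c ^ p) y w) x v =
      p * dist x c ^ (p - 2) * ⟪v, w⟫ +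
        p * (p - 2) * dist x c ^ (p - 4) * (⟪v, x - c⟫ * ⟪w, x - c⟫) := by
  have first : (fun y => fderiv ℝ (fun z => dist z c ^ p) y w) =ᶠ[𝓝 x]
      fun y => p * dist y c ^ (p - 2) * ⟪y - c, w⟫ := by
    filter_upwards [isOpen_ne.mem_nhds hx] with y hy
    simp only [(hasFDerivAt_dist_rpow p hy).fderiv, smul_apply, innerSL_apply_apply,
      smul_eq_mul]
  have h := ((hasFDerivAt_dist_rpow (p - 2) hx).const_mul p).mul
    (((hasFDerivAt_id (𝕜 := ℝ) x).sub_const c).inner ℝ (hasFDerivAt_const w x))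
  rw [first.fderiv_eq]
  refine (congr($(h.fderiv) v)).trans ?_
  simp only [id_eq, show p - 2 - 2 = p - 4 by ring, add_apply, smul_apply, zero_apply,
    ContinuousLinearMap.comp_apply, ContinuousLinearMap.prod_apply, ContinuousLinearMap.id_apply,
    fderivInnerCLM_apply, inner_zero_right, zero_add, smul_eq_mul, coe_innerSL_apply,
    real_inner_comm (x - c)]
  ring

lemma gradient_dist_rpow [CompleteSpace E] (p : ℝ) (hx : x ≠ c) :
    ∇ (fun y => dist y c ^ p) x = (p * dist x c ^ (p - 2)) • (x - c) :=
  HasGradientAt.gradient <| hasGradientAt_iff_hasFDerivAt.2 <|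
    (hasFDerivAt_dist_rpow p hx).congr_fderiv (by ext; simp)

lemma laplacian_dist_rpow [FiniteDimensional ℝ E] (p : ℝ) (hx : x ≠ c) :
    Δ (fun y => dist y c ^ p) x = p * (p + finrank ℝ E - 2) * dist x c ^ (p - 2) := by
  let b := stdOrthonormalBasis ℝ E
  have parseval : ∑ i, ⟪b i, x - c⟫ * ⟪b i, x - c⟫ = dist x c ^ 2 := by
    simpa [sq, dist_eq_norm] using b.sum_sq_norm_inner_right (x - c)
  have hpow : dist x c ^ (p - 4) * dist x c ^ 2 = dist x c ^ (p - 2) := by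
    rw [← Real.rpow_add_natCast (dist_ne_zero.2 hx)]
    ring_nf
  simp only [laplacian_eq_sum_fderiv_fderiv_apply b (contDiffAt_dist_rpow p hx),
    fderiv_fderiv_apply_dist_rpow p hx,
    Finset.sum_add_distrib, ← Finset.mul_sum, parseval, real_inner_self_eq_norm_sq,
    OrthonormalBasis.norm_eq_one, one_pow, Finset.sum_const, Finset.card_univ, Fintype.card_fin,
    nsmul_eq_mul, mul_one]
  linear_combination p * (p - 2) * hpow

end DistRpow

section Kelvin

variable {E : Type*} [NormedAddCommGroup E] [InnerProductSpace ℝ E] {c x : E}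
  {F : Type*} [NormedAddCommGroup F] [NormedSpace ℝ F]

lemma isOpen_inversion_image {R : ℝ} (hR : R ≠ 0) {s : Set E} (hs : IsOpen s) (hc : c ∉ s) :
    IsOpen (inversion c R '' s) := by
  refine isOpen_iff_mem_nhds.2 (Set.forall_mem_image.2 fun x hx => ?_)
  have hcont : ContinuousAt (inversion c R) (inversion c R x) :=
    (hasFDerivAt_inversion <|
      mt (inversion_eq_center hR).1 (ne_of_mem_of_not_mem hx hc)).continuousAt
  rw [(inversion_involutive c hR).image_eq_preimage_symm]
  exact hcont.preimage_mem_nhds (by rwa [inversion_inversion c hR, hs.mem_nhds_iff])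

lemma inversion_zero_eq_smul (R : ℝ) :
    inversion (0 : E) R = fun x => (R ^ 2 / ‖x‖ ^ 2) • x := by
  ext x
  simp [inversion, div_pow]

/-- The Kelvin transform of `u` with respect to the sphere of center `c` and radius `R`. The real
exponent keeps dimensions less than two meaningful. -/
noncomputable def kelvinTransform (c : E) (R : ℝ) (u : E → F) (x : E) : F :=
  (R / dist x c) ^ ((finrank ℝ E : ℝ) - 2) • u (inversion c R x)

lemma kelvinTransform_eq_smul {R : ℝ} (hR : 0 ≤ R) (u : E → F) :
    kelvinTransform c R u = R ^ ((finrank ℝ E : ℝ) - 2) •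
      ((fun x => dist x c ^ (2 - (finrank ℝ E : ℝ))) • (u ∘ inversion c R)) := by
  ext x
  rw [kelvinTransform, Real.div_rpow hR dist_nonneg, div_eq_mul_inv, ← Real.rpow_neg dist_nonneg,
    neg_sub, ← smul_smul]
  rfl

lemma kelvinTransform_zero_eq_smul {R : ℝ} (hR : 0 ≤ R) (u : E → F) :
    kelvinTransform 0 R u = fun x =>
      (R ^ ((finrank ℝ E : ℝ) - 2) / ‖x‖ ^ ((finrank ℝ E : ℝ) - 2)) •
        u ((R ^ 2 / ‖x‖ ^ 2) • x) := by
  ext x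
  simp only [kelvinTransform, inversion_zero_eq_smul, dist_zero_right,
    Real.div_rpow hR (norm_nonneg x)]

lemma contDiffAt_inversion (c : E) (R : ℝ) (hx : x ≠ c) {n : ℕ∞} :
    ContDiffAt ℝ n (inversion c R) x :=
  contDiffAt_const.inversion contDiffAt_const contDiffAt_id hx

lemma contDiffAt_kelvinTransform {R : ℝ} (hR : 0 ≤ R) (hx : x ≠ c) {u : E → F} {n : ℕ∞}
    (hu : ContDiffAt ℝ n u (inversion c R x)) : ContDiffAt ℝ n (kelvinTransform c R u) x := by
  rw [kelvinTransform_eq_smul hR]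
  exact ((contDiffAt_dist_rpow _ hx).smul (hu.comp x (contDiffAt_inversion c R hx))).const_smul _

lemma inversion_eq_smul_add (c : E) (R : ℝ) :
    inversion c R = R ^ 2 • ((fun y => dist y c ^ (-2 : ℝ)) • fun y => y - c) + fun _ => c := by
  ext y
  simp [inversion, div_eq_mul_inv, mul_pow, smul_smul, Real.rpow_neg dist_nonneg]

lemma fderiv_inversion_sub_center (R : ℝ) (hx : x ≠ c) :
    fderiv ℝ (inversion c R) x (x - c) = -(R / dist x c) ^ 2 • (x - c) := by
  rw [(hasFDerivAt_inversion hx).fderiv, neg_smul, ← smul_neg,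
    ← Submodule.reflection_orthogonalComplement_singleton_eq_neg (𝕜 := ℝ)]
  rfl

variable [FiniteDimensional ℝ E]

lemma laplacian_inversion (R : ℝ) (hx : x ≠ c) :
    Δ (inversion c R) x = (-2 * (finrank ℝ E - 2) * R ^ 2 / dist x c ^ 4) • (x - c) := by
  have hdist := contDiffAt_dist_rpow (-2) hx (n := 2)
  have hsub : ContDiffAt ℝ 2 (fun y => y - c) x := contDiffAt_id.sub contDiffAt_const
  have hprod := hdist.smul hsub
  have hscaled : ContDiffAt ℝ 2 (R ^ 2 • ((fun y => dist y c ^ (-2 : ℝ)) • fun y => y - c)) x :=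
    hprod.const_smul _
  have laplacian_sub_center : Δ (fun y => y - c) x = 0 := by
    have : fderiv ℝ (fun y => y - c) = fun _ => .id ℝ E := by ext; simp [fderiv_sub_const]
    simp [laplacian_eq_sum_fderiv_fderiv (stdOrthonormalBasis ℝ E), this]
  have hpow : dist x c ^ (-2 - 2 : ℝ) = (dist x c ^ 4)⁻¹ := by
    rw [← Real.rpow_natCast, ← Real.rpow_neg dist_nonneg]
    norm_num
  rw [inversion_eq_smul_add, hscaled.laplacian_add contDiffAt_const, laplacian_smul _ hprod,
    laplacian_smul_leibniz hdist hsub, laplacian_sub_center, gradient_dist_rpow _ hx,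
    laplacian_dist_rpow _ hx, hpow]
  simp only [fderiv_sub_const, fderiv_fun_id, ContinuousLinearMap.id_apply, laplacian_const,
    Pi.zero_apply, smul_zero, zero_add, add_zero]
  module

lemma laplacian_comp_inversion (R : ℝ) (hx : x ≠ c) {u : E → F}
    (hu : ContDiffAt ℝ 2 u (inversion c R x)) :
    Δ (u ∘ inversion c R) x = (R / dist x c) ^ 4 • Δ u (inversion c R x) -
      (2 * (finrank ℝ E - 2) * R ^ 2 / dist x c ^ 4) •
        fderiv ℝ u (inversion c R x) (x - c) := by
  rw [laplacian_comp_of_fderiv_eq_smul hu (contDiffAt_inversion c R hx)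
    (hasFDerivAt_inversion hx).fderiv, laplacian_inversion R hx, map_smul]
  match_scalars <;> ring

theorem laplacian_kelvinTransform {R : ℝ} (hR : 0 ≤ R) (hx : x ≠ c) {u : E → F}
    (hu : ContDiffAt ℝ 2 u (inversion c R x)) :
    Δ (kelvinTransform c R u) x = (R / dist x c) ^ 4 • kelvinTransform c R (Δ u) x := by
  have hdist := contDiffAt_dist_rpow (2 - finrank ℝ E) hx (n := 2)
  have hinv := contDiffAt_inversion c R hx (n := 2)
  have hcomp : ContDiffAt ℝ 2 (u ∘ inversion c R) x := hu.comp x hinv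
  have hpow := Real.rpow_sub_natCast (dist_ne_zero.2 hx) (2 - finrank ℝ E) 2
  have harmonic : Δ (fun y => dist y c ^ (2 - finrank ℝ E : ℝ)) x = 0 := by
    rw [laplacian_dist_rpow _ hx]
    ring
  have hradial : fderiv ℝ (u ∘ inversion c R) x (x - c) =
      -(R / dist x c) ^ 2 • fderiv ℝ u (inversion c R x) (x - c) := by
    rw [fderiv_comp x (hu.differentiableAt two_ne_zero) (hinv.differentiableAt two_ne_zero),
      ContinuousLinearMap.comp_apply, fderiv_inversion_sub_center R hx, map_smul]
  rw [kelvinTransform_eq_smul hR, kelvinTransform_eq_smul hR,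
    laplacian_smul _ (hdist.smul hcomp), laplacian_smul_leibniz hdist hcomp,
    laplacian_comp_inversion R hx hu, gradient_dist_rpow _ hx, harmonic, map_smul, hradial]
  push_cast at hpow
  rw [hpow]
  simp only [Pi.smul_apply, Pi.smul_apply', Function.comp_apply]
  module

lemma rpow_sub_two_rpow_critical {d r : ℝ} (hr : 0 < r) (hd : d ≠ 2) :
    (r ^ (d - 2)) ^ ((d + 2) / (d - 2)) = r ^ 4 * r ^ (d - 2) := by
  rw [← Real.rpow_mul hr.le, mul_div_cancel₀ _ (sub_ne_zero.2 hd), mul_comm,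
    ← Real.rpow_add_natCast hr.ne']
  congr 1
  push_cast
  ring

theorem stmt_11_general (hdim : finrank ℝ E ≠ 2) {R : ℝ} (hR : 0 < R) {Ω : Set E} (hΩ : IsOpen Ω)
    (hc : c ∉ Ω) (a : ℝ) {K u : E → ℝ} (hu : ContDiffOn ℝ 2 u (inversion c R '' Ω))
    (hu_nonneg : ∀ y ∈ inversion c R '' Ω, 0 ≤ u y)
    (hpde : ∀ y ∈ inversion c R '' Ω,
      a * Δ u y = K y * u y ^ (((finrank ℝ E : ℝ) + 2) / ((finrank ℝ E : ℝ) - 2))) :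
    ∀ x ∈ Ω, a * Δ (kelvinTransform c R u) x = K (inversion c R x) *
      kelvinTransform c R u x ^ (((finrank ℝ E : ℝ) + 2) / ((finrank ℝ E : ℝ) - 2)) := by
  intro x hxΩ
  have hx : x ≠ c := ne_of_mem_of_not_mem hxΩ hc
  have hy : inversion c R x ∈ inversion c R '' Ω := Set.mem_image_of_mem _ hxΩ
  have hratio : 0 < R / dist x c := div_pos hR (dist_pos.2 hx)
  have hu_at := hu.contDiffAt ((isOpen_inversion_image hR.ne' hΩ hc).mem_nhds hy)
  rw [laplacian_kelvinTransform hR.le hx hu_at]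
  simp only [kelvinTransform, smul_eq_mul]
  rw [Real.mul_rpow (Real.rpow_nonneg hratio.le _) (hu_nonneg _ hy),
    rpow_sub_two_rpow_critical hratio (mod_cast hdim)]
  linear_combination (R / dist x c) ^ 4 * (R / dist x c) ^ ((finrank ℝ E : ℝ) - 2) * hpde _ hy

end Kelvin

lemma lap_eq_laplacian {n : ℕ} {u : EuclideanSpace ℝ (Fin n) → ℝ} {x : EuclideanSpace ℝ (Fin n)}
    (hu : ContDiffAt ℝ 2 u x) : lap u x = Δ u x := by
  simp only [lap, laplacian_eq_sum_fderiv_fderiv_apply (EuclideanSpace.basisFun (Fin n) ℝ) hu,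
    EuclideanSpace.basisFun_apply]

/-- Conformal invariance of the prescribed scalar curvature equation under Kelvin
inversion `ι(x) = μ² x/|x|²`: if `u` solves `-c_n Δu = K u^((n+2)/(n-2))` on `ι(Ω)`, then
the Kelvin transform `ǔ(x) = (μ^(n-2)/|x|^(n-2)) u(ι(x))` solves
`-c_n Δǔ = (K ∘ ι) ǔ^((n+2)/(n-2))` on `Ω`. -/
theorem stmt_11 (n : ℕ) (hn : 3 ≤ n) (mu : ℝ) (hmu : 0 < mu)
    (Ω : Set (EuclideanSpace ℝ (Fin n))) (hΩ : IsOpen Ω)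
    (hΩ0 : (0 : EuclideanSpace ℝ (Fin n)) ∉ Ω)
    (K u : EuclideanSpace ℝ (Fin n) → ℝ)
    (hu : ContDiffOn ℝ 2 u ((fun x : EuclideanSpace ℝ (Fin n) => (mu ^ 2 / ‖x‖ ^ 2) • x) '' Ω))
    (hupos : ∀ y ∈ (fun x : EuclideanSpace ℝ (Fin n) => (mu ^ 2 / ‖x‖ ^ 2) • x) '' Ω, 0 < u y)
    (hpde : ∀ y ∈ (fun x : EuclideanSpace ℝ (Fin n) => (mu ^ 2 / ‖x‖ ^ 2) • x) '' Ω,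
      -((4 * ((n : ℝ) - 1)) / ((n : ℝ) - 2)) * lap u y
        = K y * u y ^ (((n : ℝ) + 2) / ((n : ℝ) - 2))) :
    ∀ x ∈ Ω,
      -((4 * ((n : ℝ) - 1)) / ((n : ℝ) - 2)) *
          lap (fun z => mu ^ ((n : ℝ) - 2) / ‖z‖ ^ ((n : ℝ) - 2)
            * u ((mu ^ 2 / ‖z‖ ^ 2) • z)) x
        = K ((mu ^ 2 / ‖x‖ ^ 2) • x) *
            (mu ^ ((n : ℝ) - 2) / ‖x‖ ^ ((n : ℝ) - 2) * u ((mu ^ 2 / ‖x‖ ^ 2) • x))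
              ^ (((n : ℝ) + 2) / ((n : ℝ) - 2)) := by
  intro x hx
  rw [← inversion_zero_eq_smul] at hu hupos hpde
  have hu_at {y} (hy : y ∈ inversion 0 mu '' Ω) : ContDiffAt ℝ 2 u y :=
    hu.contDiffAt ((isOpen_inversion_image hmu.ne' hΩ hΩ0).mem_nhds hy)
  have kelvin_pde := stmt_11_general (K := K) (by rw [finrank_euclideanSpace_fin]; lia) hmu hΩ hΩ0
    (-((4 * ((n : ℝ) - 1)) / ((n : ℝ) - 2))) hu (fun y hy => (hupos y hy).le)
    (fun y hy => by
      simpa only [finrank_euclideanSpace_fin, lap_eq_laplacian (hu_at hy)] using hpde y hy) x hx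
  have hkelvin := contDiffAt_kelvinTransform hmu.le (ne_of_mem_of_not_mem hx hΩ0)
    (hu_at (Set.mem_image_of_mem _ hx))
  rw [← lap_eq_laplacian hkelvin] at kelvin_pde
  simpa only [finrank_euclideanSpace_fin, inversion_zero_eq_smul,
    kelvinTransform_zero_eq_smul hmu.le, smul_eq_mul] using kelvin_pde
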